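/- arXiv:1612.07657 — 2 statements merged into one kernel-verified Lean document; each statement's English description precedes it below -/
import Mathlib

section
/- Let R be a commutative ring, q ≥ 2 an integer, and let ∘ be the w-product on R[[x]] with weight w(n,m) = (₍₀,q₎P)_{n,m}. Let z ∈ R[[x]] satisfy z_k = 0 whenever k mod q < ⌈q/2⌉. Then z ∘ z = 0, and consequently the n-th ∘-power of 1 + z equals 1 + n·z for every integer n ≥ 0. -/
open PowerSeries

/-- The `w`-product of formal power series:
`[xⁿ](a ∘ b) = ∑_{m=0}^{n} w(n,m)·aₘ·b_{n−m}`. -/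
noncomputable def wmul {R : Type*} [CommRing R] (w : ℕ → ℕ → R)
    (a b : PowerSeries R) : PowerSeries R :=
  PowerSeries.mk fun n => ∑ m ∈ Finset.range (n + 1),
    w n m * PowerSeries.coeff m a * PowerSeries.coeff (n - m) b

/-- The `n`-th `∘`-power of `a` (with `a^{(0)} = 1`). -/
noncomputable def wpow {R : Type*} [CommRing R] (w : ℕ → ℕ → R)
    (a : PowerSeries R) : ℕ → PowerSeries R
  | 0 => 1
  | n + 1 => wmul w a (wpow w a n)

/-!
If `i` and `j` both have residue at least `⌈q/2⌉` modulo `q`, then adding them produces a carry, so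
the residue of `i + j` is strictly smaller than that of `i` and the weight `w(i + j, i)` vanishes.
Hence `z ∘ z = 0`, and since `1` is a two-sided unit of the bilinear product `∘`, each further
factor `1 + z` just adds one more copy of `z`.
-/

section WMul

variable {R : Type*} [CommRing R] (w : ℕ → ℕ → R)

theorem coeff_wmul (a b : PowerSeries R) (n : ℕ) :
    coeff n (wmul w a b) =
      ∑ p ∈ Finset.HasAntidiagonal.antidiagonal n, w n p.1 * coeff p.1 a * coeff p.2 b := by
  rw [wmul, coeff_mk, Finset.Nat.sum_antidiagonal_eq_sum_range_succ_mk]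

theorem add_wmul (a b c : PowerSeries R) : wmul w (a + b) c = wmul w a c + wmul w b c := by
  ext n
  simp only [coeff_wmul, map_add, mul_add, add_mul, Finset.sum_add_distrib]

theorem wmul_add (a b c : PowerSeries R) : wmul w a (b + c) = wmul w a b + wmul w a c := by
  ext n
  simp only [coeff_wmul, map_add, mul_add, Finset.sum_add_distrib]

theorem wmul_nsmul (a b : PowerSeries R) (k : ℕ) : wmul w a (k • b) = k • wmul w a b :=
  map_nsmul (AddMonoidHom.mk' (wmul w a) (wmul_add w a)) k b

variable {w}

theorem one_wmul (hw : ∀ n, w n 0 = 1) (b : PowerSeries R) : wmul w 1 b = b := by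
  ext n
  rw [coeff_wmul, Finset.sum_eq_single (0, n)]
  · simp [hw]
  · rintro ⟨i, j⟩ hij hne
    have hi : i ≠ 0 := by
      rintro rfl
      simp_all
    simp [coeff_one, hi]
  · simp

theorem wmul_one (hw : ∀ n, w n n = 1) (a : PowerSeries R) : wmul w a 1 = a := by
  ext n
  rw [coeff_wmul, Finset.sum_eq_single (n, 0)]
  · simp [hw]
  · rintro ⟨i, j⟩ hij hne
    have hj : j ≠ 0 := by
      rintro rfl
      simp_all
    simp [coeff_one, hj]
  · simp

theorem wpow_one_add_of_wmul_self_eq_zero (hw_zero : ∀ n, w n 0 = 1) (hw_diag : ∀ n, w n n = 1)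
    {z : PowerSeries R} (hz : wmul w z z = 0) (n : ℕ) : wpow w (1 + z) n = 1 + n • z := by
  induction n with
  | zero => rw [wpow, zero_nsmul, add_zero]
  | succ n ih =>
    have wmul_z : wmul w z (1 + n • z) = z := by
      rw [wmul_add, wmul_one hw_diag, wmul_nsmul, hz, nsmul_zero, add_zero]
    rw [wpow, ih, add_wmul, one_wmul hw_zero, wmul_z, succ_nsmul, add_assoc]

end WMul

theorem add_mod_lt_mod_of_le_add_mod {q i j : ℕ} (hq : 0 < q) (hcarry : q ≤ i % q + j % q) :
    (i + j) % q < i % q := by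
  have hsum : (i + j) % q + q = i % q + j % q := Nat.add_mod_add_of_le_add_mod hcarry
  have hj : j % q < q := Nat.mod_lt j hq
  omega

section ResidueWeight

variable (R : Type*) [Zero R] [One R]

/-- The `(n, m)` entry of the matrix `₍₀,q₎P`, used as the weight of a `w`-product. The entries
above the diagonal are set to `0`, although the `w`-product never reads them. -/
def residueWeight (q n m : ℕ) : R :=
  if m ≤ n ∧ m % q ≤ n % q then 1 else 0

theorem residueWeight_zero_right (q n : ℕ) : residueWeight R q n 0 = 1 := by
  simp [residueWeight]

theorem residueWeight_self (q n : ℕ) : residueWeight R q n n = 1 := by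
  simp [residueWeight]

theorem residueWeight_eq_zero_of_mod_lt {q n m : ℕ} (h : n % q < m % q) :
    residueWeight R q n m = 0 :=
  if_neg fun hle => h.not_ge hle.2

end ResidueWeight

theorem wmul_residueWeight_eq_zero {R : Type*} [CommRing R] {q s t : ℕ} (hq : 0 < q)
    (hst : q ≤ s + t) {a b : PowerSeries R} (ha : ∀ k, k % q < s → coeff k a = 0)
    (hb : ∀ k, k % q < t → coeff k b = 0) : wmul (residueWeight R q) a b = 0 := by
  ext n
  rw [coeff_wmul, map_zero]
  refine Finset.sum_eq_zero fun ⟨i, j⟩ hij => ?_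
  obtain rfl : i + j = n := Finset.HasAntidiagonal.mem_antidiagonal.mp hij
  rcases lt_or_ge (i % q) s with his | his
  · rw [ha i his, mul_zero, zero_mul]
  rcases lt_or_ge (j % q) t with hjt | hjt
  · rw [hb j hjt, mul_zero]
  have hcarry : (i + j) % q < i % q :=
    add_mod_lt_mod_of_le_add_mod hq (hst.trans (add_le_add his hjt))
  rw [residueWeight_eq_zero_of_mod_lt R hcarry, zero_mul, zero_mul]

/-- In the algebra with weight `w(n,m) = (₍₀,q₎P)_{n,m}`, if `z` is supported on
exponents whose residue mod `q` is at least `⌈q/2⌉`, then `z ∘ z = 0` and the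
`n`-th `∘`-power of `1 + z` equals `1 + n·z` for every `n ≥ 0`. -/
theorem lseries_pow {R : Type*} [CommRing R] (q : ℕ) (hq : 2 ≤ q)
    (z : PowerSeries R)
    (hz : ∀ k : ℕ, k % q < (q + 1) / 2 → PowerSeries.coeff k z = 0) :
    wmul (fun n m => if m ≤ n ∧ m % q ≤ n % q then (1 : R) else 0) z z = 0 ∧
    ∀ n : ℕ, wpow (fun n m => if m ≤ n ∧ m % q ≤ n % q then (1 : R) else 0)
      (1 + z) n = 1 + n • z := by
  have hzz : wmul (residueWeight R q) z z = 0 :=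
    wmul_residueWeight_eq_zero (by omega) (by omega) hz hz
  exact ⟨hzz, wpow_one_add_of_wmul_self_eq_zero (residueWeight_zero_right R q)
    (residueWeight_self R q) hzz⟩
end

section
/- Let K be a commutative ℚ-algebra, q ≥ 2 an integer, and φ, β ∈ K. Define S_φ(n, m) = ∏_i C(φ, n_i − m_i), the finite product taken over the base-q digit positions, where n = Σ_i n_i q^i and m = Σ_i m_i q^i (0 ≤ n_i, m_i < q). Then: (a) S_1(n, m) = B_q(n, m) for all n, m; (b) for all m ≤ n, Σ_{k=m}^{n} S_φ(n, k) · S_β(k, m) = S_{φ+β}(n, m). -/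
/-- The generalized binomial coefficient `C(φ,k) = binom(φ+k−1, k)
= φ(φ+1)⋯(φ+k−1)/k!` for `k ≥ 0`, and `0` for `k < 0`. -/
noncomputable def genC {K : Type*} [CommRing K] [Algebra ℚ K] (φ : K) (k : ℤ) : K :=
  if 0 ≤ k then
    (∏ i ∈ Finset.range k.toNat, (φ + (i : K))) *
      algebraMap ℚ K (1 / (k.toNat.factorial : ℚ))
  else 0

open Classical in
/-- The entries of the fractal zero generalized Pascal matrix `₍[0,q]₎P`, as
elements of `K`. -/
noncomputable def BqK (K : Type*) [CommRing K] [Algebra ℚ K] (q n m : ℕ) : K :=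
  if m ≤ n ∧ ∀ k : ℕ, 1 ≤ k → m % q ^ k ≤ n % q ^ k then 1 else 0

/-- The matrix realizing the `φ`-th power of `₍[0,q]₎P`:
`S_φ(n,m) = ∏ᵢ C(φ, nᵢ − mᵢ)` over the base-`q` digit positions (the range
`i ≤ n + m` captures all nonzero digits). -/
noncomputable def Spow {K : Type*} [CommRing K] [Algebra ℚ K] (q : ℕ) (φ : K)
    (n m : ℕ) : K :=
  ∏ i ∈ Finset.range (n + m + 1),
    genC φ ((n / q ^ i % q : ℕ) - (m / q ^ i % q : ℕ) : ℤ)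

/-!
Both claims reduce to single digits. Every entry of `S₁` is a product of values of `C(1, ·)`, which
is the indicator of `k ≥ 0`; so `S₁` is the indicator of digitwise domination, equivalently of
domination of all residues modulo powers of `q`. For the product law, summing over all `k < q ^ N`
means summing over each digit of `k` independently, so the sum factors over the digit positions,
and each factor is the Chu–Vandermonde identity `∑ C(φ, a - b) C(β, b - c) = C(φ + β, a - c)`.
Terms with `k` outside `[m, n]` vanish because digitwise domination implies `≤`.
-/

open Finset

theorem sum_range_pow_prod_digit {R : Type*} [CommSemiring R] (q N : ℕ) (f : ℕ → ℕ → R) :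
    ∑ k ∈ range (q ^ N), ∏ i ∈ range N, f i (k / q ^ i % q) =
      ∏ i ∈ range N, ∑ b ∈ range q, f i b := by
  simp only [sum_range, prod_range, Fintype.prod_sum]
  exact finFunctionFinEquiv.symm.sum_comp fun d : Fin N → Fin q ↦ ∏ i : Fin N, f i (d i)

theorem multichoose_add {R : Type*} [Ring R] [BinomialRing R] {r s : R} (h : Commute r s) (n : ℕ) :
    Ring.multichoose (r + s) n =
      ∑ p ∈ antidiagonal n, Ring.multichoose r p.1 * Ring.multichoose s p.2 := by
  -- `multichoose r n` is `choose (-r) n` up to the sign `(-1) ^ n`, so this is Chu–Vandermonde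
  -- at `-r` and `-s`.
  refine MulAction.injective (Int.negOnePow n) ?_
  calc Int.negOnePow n • Ring.multichoose (r + s) n
      = Ring.choose (-r + -s) n := by rw [← Ring.choose_neg', neg_add]
    _ = ∑ p ∈ antidiagonal n, Ring.choose (-r) p.1 * Ring.choose (-s) p.2 :=
        Ring.add_choose_eq n h.neg_left.neg_right
    _ = Int.negOnePow n •
          ∑ p ∈ antidiagonal n, Ring.multichoose r p.1 * Ring.multichoose s p.2 := by
        rw [smul_sum]
        refine sum_congr rfl fun p hp ↦ ?_
        rw [Ring.choose_neg', Ring.choose_neg', smul_mul_smul_comm, ← Int.negOnePow_add,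
          ← Nat.cast_add, mem_antidiagonal.mp hp]

/-- Digitwise domination in base `q`: no base-`q` digit of `m` exceeds the corresponding digit of
`n`. The matrices `Spow q φ` are supported on this relation. -/
def DigitLE (q m n : ℕ) : Prop :=
  ∀ i, m / q ^ i % q ≤ n / q ^ i % q

theorem DigitLE.mod_pow_le {q m n : ℕ} (h : DigitLE q m n) (k : ℕ) : m % q ^ k ≤ n % q ^ k := by
  induction k with
  | zero => simp only [pow_zero, Nat.mod_one, le_refl]
  | succ k ih =>
    rw [Nat.mod_pow_succ, Nat.mod_pow_succ]
    exact Nat.add_le_add ih (Nat.mul_le_mul_left _ (h k))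

theorem DigitLE.le {q m n : ℕ} (hq : 1 < q) (h : DigitLE q m n) : m ≤ n := by
  have hlt : m + n < q ^ (m + n) := Nat.lt_pow_self hq
  have hmod := h.mod_pow_le (m + n)
  rwa [Nat.mod_eq_of_lt (by lia), Nat.mod_eq_of_lt (by lia)] at hmod

theorem digitLE_iff_le_and_forall_mod_pow_le {q m n : ℕ} (hq : 1 < q) :
    DigitLE q m n ↔ m ≤ n ∧ ∀ k, 1 ≤ k → m % q ^ k ≤ n % q ^ k := by
  refine ⟨fun h ↦ ⟨h.le hq, fun k _ ↦ h.mod_pow_le k⟩, fun ⟨_, hmod⟩ i ↦ ?_⟩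
  have hdiv := Nat.div_le_div_right (c := q ^ i) (hmod (i + 1) (Nat.le_add_left 1 i))
  rwa [pow_succ, Nat.mod_mul_right_div_self, Nat.mod_mul_right_div_self] at hdiv

theorem smeval_ascPochhammer_eq_prod_range {R : Type*} [CommSemiring R] (r : R) (k : ℕ) :
    (ascPochhammer ℕ k).smeval r = ∏ i ∈ range k, (r + (i : R)) := by
  rw [Polynomial.ascPochhammer_smeval_eq_eval]
  induction k with
  | zero => simp only [ascPochhammer_zero, Polynomial.eval_one, range_zero, prod_empty]
  | succ k ih => rw [ascPochhammer_succ_eval, ih, prod_range_succ]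

section GenC

variable {K : Type*} [CommRing K] [Algebra ℚ K]

theorem genC_natCast (φ : K) (k : ℕ) :
    genC φ k = (∏ i ∈ range k, (φ + (i : K))) * algebraMap ℚ K (1 / (k.factorial : ℚ)) := by
  simp [genC]

theorem genC_of_neg (φ : K) {k : ℤ} (hk : k < 0) : genC φ k = 0 :=
  if_neg hk.not_ge

theorem genC_zero (φ : K) : genC φ 0 = 1 := by
  simp [genC]

theorem factorial_nsmul_genC (φ : K) (k : ℕ) :
    k.factorial • genC φ k = (ascPochhammer ℕ k).smeval φ := by
  have hfact : (k.factorial : K) * algebraMap ℚ K (1 / (k.factorial : ℚ)) = 1 := by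
    rw [← map_natCast (algebraMap ℚ K), ← map_mul,
      mul_one_div_cancel (Nat.cast_ne_zero.mpr k.factorial_ne_zero), map_one]
  rw [genC_natCast, nsmul_eq_mul, mul_left_comm, hfact, mul_one,
    smeval_ascPochhammer_eq_prod_range]

/-- A commutative `ℚ`-algebra as a binomial ring with `genC` as its `Ring.multichoose`. -/
noncomputable abbrev binomialRingOfAlgebraRat : BinomialRing K where
  toIsAddTorsionFree := .of_module_rat K
  multichoose φ k := genC φ k
  factorial_nsmul_multichoose := factorial_nsmul_genC

attribute [local instance] binomialRingOfAlgebraRat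

theorem multichoose_eq_genC (φ : K) (k : ℕ) : Ring.multichoose φ k = genC φ k :=
  rfl

theorem genC_one_of_nonneg {k : ℤ} (hk : 0 ≤ k) : genC (1 : K) k = 1 := by
  lift k to ℕ using hk
  exact Ring.multichoose_one k

theorem sum_Icc_genC_mul_genC (φ β : K) (a c : ℕ) :
    ∑ b ∈ Icc c a, genC φ (a - b) * genC β (b - c) = genC (φ + β) (a - c) := by
  rcases lt_or_ge a c with hac | hca
  · rw [Icc_eq_empty_of_lt hac, sum_empty, genC_of_neg _ (by lia)]
  · obtain ⟨d, rfl⟩ := Nat.exists_eq_add_of_le hca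
    calc ∑ b ∈ Icc c (c + d), genC φ ((c + d : ℕ) - b) * genC β (b - c)
        = ∑ k ∈ range (d + 1), genC β k * genC φ (d - k : ℕ) := by
          rw [← Ico_add_one_right_eq_Icc, sum_Ico_eq_sum_range, add_assoc, Nat.add_sub_cancel_left]
          refine sum_congr rfl fun k hk ↦ ?_
          have hkd := mem_range_succ_iff.mp hk
          rw [mul_comm]
          congr 2 <;> lia
      _ = genC (β + φ) d := by
          simp only [← multichoose_eq_genC]
          rw [multichoose_add (Commute.all β φ), Nat.sum_antidiagonal_eq_sum_range_succ
            fun i j ↦ Ring.multichoose β i * Ring.multichoose φ j]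
      _ = genC (φ + β) ((c + d : ℕ) - c) := by
          rw [add_comm β]
          congr 1
          lia

theorem sum_range_genC_mul_genC (φ β : K) {q a : ℕ} (ha : a < q) (c : ℕ) :
    ∑ b ∈ range q, genC φ (a - b) * genC β (b - c) = genC (φ + β) (a - c) := by
  have hsub : Icc c a ⊆ range q := fun b hb ↦ mem_range.mpr ((mem_Icc.mp hb).2.trans_lt ha)
  rw [← sum_Icc_genC_mul_genC, ← sum_subset hsub]
  intro b _ hb
  rcases lt_or_ge b c with hbc | hcb
  · rw [genC_of_neg β (by lia), mul_zero]
  · have hab : a < b := by simpa [hcb] using hb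
    rw [genC_of_neg φ (by lia), zero_mul]

end GenC

section Spow

variable {K : Type*} [CommRing K] [Algebra ℚ K] {q : ℕ}

theorem Spow_eq_prod_range (hq : 1 < q) (φ : K) {n m N : ℕ} (hn : n < q ^ N) (hm : m < q ^ N) :
    Spow q φ n m =
      ∏ i ∈ range N, genC φ ((n / q ^ i % q : ℕ) - (m / q ^ i % q : ℕ) : ℤ) := by
  have factor_eq_one {M i : ℕ} (hnM : n < q ^ M) (hmM : m < q ^ M) (hi : i ∉ range M) :
      genC φ ((n / q ^ i % q : ℕ) - (m / q ^ i % q : ℕ) : ℤ) = 1 := by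
    have hpow : q ^ M ≤ q ^ i := Nat.pow_le_pow_right (by lia) (by simpa using hi)
    rw [Nat.div_eq_of_lt (hnM.trans_le hpow), Nat.div_eq_of_lt (hmM.trans_le hpow), sub_self,
      genC_zero]
  have hlt : n + m + 1 < q ^ (n + m + 1) := Nat.lt_pow_self hq
  exact prod_congr_of_eq_on_inter (fun _ _ hi ↦ factor_eq_one hn hm hi)
    (fun _ _ hi ↦ factor_eq_one (by lia) (by lia) hi) fun _ _ _ ↦ rfl

theorem Spow_eq_zero_of_not_digitLE (hq : 1 < q) (φ : K) {n m : ℕ} (h : ¬ DigitLE q m n) :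
    Spow q φ n m = 0 := by
  obtain ⟨i, hi⟩ := not_forall.mp h
  have hmi : m / q ^ i ≠ 0 := fun h0 ↦ hi (by simp [h0])
  have him : i < m := (Nat.lt_pow_self hq).trans_le (Nat.div_ne_zero_iff.mp hmi).2
  exact prod_eq_zero (i := i) (mem_range.mpr (by lia)) (genC_of_neg φ (by lia))

theorem Spow_eq_zero_of_lt (hq : 1 < q) (φ : K) {n m : ℕ} (h : n < m) : Spow q φ n m = 0 :=
  Spow_eq_zero_of_not_digitLE hq φ fun hle ↦ h.not_ge (hle.le hq)

theorem Spow_one_of_digitLE {n m : ℕ} (h : DigitLE q m n) : Spow q (1 : K) n m = 1 :=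
  prod_eq_one fun i _ ↦ genC_one_of_nonneg (sub_nonneg.mpr (Nat.cast_le.mpr (h i)))

theorem Spow_one_eq_BqK (hq : 1 < q) (n m : ℕ) : Spow q (1 : K) n m = BqK K q n m := by
  unfold BqK
  split_ifs with h <;> rw [← digitLE_iff_le_and_forall_mod_pow_le hq] at h
  · exact Spow_one_of_digitLE h
  · exact Spow_eq_zero_of_not_digitLE hq 1 h

theorem sum_range_pow_Spow_mul_Spow (hq : 1 < q) (φ β : K) {n m N : ℕ} (hn : n < q ^ N)
    (hm : m < q ^ N) :
    ∑ k ∈ range (q ^ N), Spow q φ n k * Spow q β k m = Spow q (φ + β) n m := by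
  let digit (k i : ℕ) : ℕ := k / q ^ i % q
  calc ∑ k ∈ range (q ^ N), Spow q φ n k * Spow q β k m
      = ∑ k ∈ range (q ^ N), ∏ i ∈ range N,
          genC φ (digit n i - digit k i) * genC β (digit k i - digit m i) := by
        refine sum_congr rfl fun k hk ↦ ?_
        have hkN := mem_range.mp hk
        rw [Spow_eq_prod_range hq φ hn hkN, Spow_eq_prod_range hq β hkN hm, prod_mul_distrib]
    _ = ∏ i ∈ range N, ∑ b ∈ range q, genC φ (digit n i - b) * genC β (b - digit m i) :=
        sum_range_pow_prod_digit q N fun i b ↦ genC φ (digit n i - b) * genC β (b - digit m i)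
    _ = ∏ i ∈ range N, genC (φ + β) (digit n i - digit m i) :=
        prod_congr rfl fun i _ ↦ sum_range_genC_mul_genC φ β (Nat.mod_lt _ (by lia)) _
    _ = Spow q (φ + β) n m := (Spow_eq_prod_range hq _ hn hm).symm

theorem sum_Icc_Spow_mul_Spow (hq : 1 < q) (φ β : K) (n m : ℕ) :
    ∑ k ∈ Icc m n, Spow q φ n k * Spow q β k m = Spow q (φ + β) n m := by
  have hlt : n + m < q ^ (n + m) := Nat.lt_pow_self hq
  have hsub : Icc m n ⊆ range (q ^ (n + m)) := fun k hk ↦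
    mem_range.mpr ((mem_Icc.mp hk).2.trans_lt (by lia))
  rw [← sum_range_pow_Spow_mul_Spow hq φ β (N := n + m) (by lia) (by lia), sum_subset hsub]
  intro k _ hk
  rcases lt_or_ge k m with hkm | hmk
  · rw [Spow_eq_zero_of_lt hq β hkm, mul_zero]
  · have hnk : n < k := by simpa [hmk] using hk
    rw [Spow_eq_zero_of_lt hq φ hnk, zero_mul]

end Spow

/-- (a) `S₁ = ₍[0,q]₎P`; (b) the family `S_φ` satisfies `S_φ · S_β = S_{φ+β}`. -/
theorem Spow_one_and_mul {K : Type*} [CommRing K] [Algebra ℚ K]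
    (q : ℕ) (hq : 2 ≤ q) (φ β : K) :
    (∀ n m : ℕ, Spow q (1 : K) n m = BqK K q n m) ∧
    (∀ n m : ℕ, m ≤ n →
      ∑ k ∈ Finset.Icc m n, Spow q φ n k * Spow q β k m = Spow q (φ + β) n m) := by
  exact ⟨Spow_one_eq_BqK hq, fun n m _ ↦ sum_Icc_Spow_mul_Spow hq φ β n m⟩
end
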